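/- arXiv:2603.15209 — 3 statements merged into one kernel-verified Lean document; each statement's English description precedes it below -/
import Mathlib

section
/- Let c > 0 and let Q : ℝ → ℝ be C¹ with Q(0) = 0, Q(z) ≥ 0 for z ≥ 0, and Q(z) ≤ 0 for z ∈ (−1, 0). Let b₀ : ℝ^d → ℝ satisfy 1 + b₀(y) > 0 for every y, and for each y ∈ ℝ^d let b̃(·, y) : [0,∞) → ℝ be the solution of d/dt b̃(t,y) = −c²(1 + b̃(t,y)) Q(b̃(t,y)) with b̃(0,y) = b₀(y). Then for all 0 ≤ t₁ ≤ t₂, sup_y |b̃(t₂, y)| ≤ sup_y |b̃(t₁, y)| (the L∞ norm in y is nonincreasing in time), and for all t ≥ 0 and all y, 1 + b̃(t,y) ≥ min(1, inf_x (1 + b₀(x))). -/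
open Real Set

/-!
Everything reduces to one scalar solution `f = b̃(·, y)`. Writing `u = 1 + f`, the equation is linear
in `u`, namely `u' = a u` with `a = -c² Q(f)` bounded on compact time intervals; hence `u²` decays at
most exponentially, `u` never vanishes, and `u > 0` by continuity (`one_add_pos`). Given this, the
sign conditions on `Q` make `(f²)' = -2c² (1 + f) f Q(f) ≤ 0`, so `|f|` is nonincreasing
(`abs_antitone`), and taking the supremum over `y` gives the first claim. If `f` were ever below
`m = min(0, f 0)`, it would have taken the value `m` at an earlier time, and `|f|` would have
increased since; so `f ≥ m` (`min_le_sol`), which is the second claim.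
-/

/-- Positivity of `1 + f` is propagated: on `[0, t]` with `|c² Q(f)| ≤ M`, the function
`(1 + f)² exp(2 M s)` is nondecreasing, so `1 + f` cannot reach zero. -/
lemma one_add_pos {c : ℝ} {Q f : ℝ → ℝ} (hQ : Continuous Q) (h0 : 0 < 1 + f 0)
    (hf : ∀ t ∈ Ici (0:ℝ),
      HasDerivWithinAt f (-(c ^ 2 * ((1 + f t) * Q (f t)))) (Ici 0) t)
    {t : ℝ} (ht : 0 ≤ t) : 0 < 1 + f t := by
  have hcont : ContinuousOn f (Ici 0) := fun s hs => (hf s hs).continuousWithinAt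
  have hne : ∀ s, 0 ≤ s → 1 + f s ≠ 0 := by
    intro t ht
    have hc1 : ContinuousOn f (Icc 0 t) := hcont.mono Icc_subset_Ici_self
    obtain ⟨M, hM⟩ := isCompact_Icc.exists_bound_of_continuousOn
      (f := fun s => c ^ 2 * Q (f s)) (continuousOn_const.mul (hQ.comp_continuousOn hc1))
    have hmono : MonotoneOn (fun s => (1 + f s) ^ 2 * exp (2 * M * s)) (Icc 0 t) := by
      refine monotoneOn_of_hasDerivWithinAt_nonneg (convex_Icc 0 t) (by fun_prop)
        (f' := fun s => 2 * (1 + f s) ^ 2 * exp (2 * M * s) * (M - c ^ 2 * Q (f s))) ?_ ?_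
      · intro s hs
        rw [interior_Icc] at hs ⊢
        have h1 := ((hf s hs.1.le).mono (fun x (hx : x ∈ Ioo 0 t) => hx.1.le)).const_add 1
        have h2 : HasDerivAt (fun s => exp (2 * M * s)) (exp (2 * M * s) * (2 * M * 1)) s :=
          ((hasDerivAt_id s).const_mul (2 * M)).exp
        refine ((h1.pow 2).mul h2.hasDerivWithinAt).congr_deriv ?_
        simp only [Pi.pow_apply]
        push_cast
        ring
      · intro s hs
        have h3 := (abs_le.1 (hM s (interior_subset hs))).2
        have h4 : 0 ≤ M - c ^ 2 * Q (f s) := by linarith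
        positivity
    have h5 := hmono (left_mem_Icc.2 ht) (right_mem_Icc.2 ht) ht
    intro h6
    simp only [h6, mul_zero, exp_zero, mul_one] at h5
    nlinarith [pow_pos h0 2]
  by_contra! h
  obtain ⟨s, hs, hs'⟩ := intermediate_value_Icc' ht
    (hcont.mono Icc_subset_Ici_self) (show (-1 : ℝ) ∈ Icc (f t) (f 0) from
      ⟨by linarith, by linarith⟩)
  exact hne s hs.1 (by rw [hs']; norm_num)

lemma abs_antitone {c : ℝ} {Q f : ℝ → ℝ} (hQ : Continuous Q)
    (hQpos : ∀ z, 0 ≤ z → 0 ≤ Q z) (hQneg : ∀ z, z ∈ Ioo (-1:ℝ) 0 → Q z ≤ 0)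
    (h0 : 0 < 1 + f 0)
    (hf : ∀ t ∈ Ici (0:ℝ),
      HasDerivWithinAt f (-(c ^ 2 * ((1 + f t) * Q (f t)))) (Ici 0) t) :
    AntitoneOn (fun t => |f t|) (Ici 0) := by
  have hcont : ContinuousOn f (Ici 0) := fun s hs => (hf s hs).continuousWithinAt
  have hanti : AntitoneOn (fun s => f s ^ 2) (Ici 0) := by
    refine antitoneOn_of_hasDerivWithinAt_nonpos (convex_Ici 0) (by fun_prop)
      (f' := fun s => -(2 * c ^ 2 * (1 + f s) * (f s * Q (f s)))) ?_ ?_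
    · intro s hs
      refine (((hf s (interior_subset hs)).mono interior_subset).pow 2).congr_deriv ?_
      push_cast
      ring
    · intro s hs
      have h1 := one_add_pos hQ h0 hf (interior_subset hs)
      have h2 : 0 ≤ f s * Q (f s) := by
        rcases le_or_gt 0 (f s) with h | h
        · exact mul_nonneg h (hQpos _ h)
        · exact mul_nonneg_of_nonpos_of_nonpos h.le (hQneg _ ⟨by linarith, h⟩)
      have : 0 ≤ 2 * c ^ 2 * (1 + f s) * (f s * Q (f s)) := by positivity
      simpa using this
  intro s hs t ht hst
  exact sq_le_sq.1 (hanti hs ht hst)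

lemma min_le_sol {c : ℝ} {Q f : ℝ → ℝ} (hQ : Continuous Q)
    (hQpos : ∀ z, 0 ≤ z → 0 ≤ Q z) (hQneg : ∀ z, z ∈ Ioo (-1:ℝ) 0 → Q z ≤ 0)
    (h0 : 0 < 1 + f 0)
    (hf : ∀ t ∈ Ici (0:ℝ),
      HasDerivWithinAt f (-(c ^ 2 * ((1 + f t) * Q (f t)))) (Ici 0) t)
    {t : ℝ} (ht : 0 ≤ t) : min 0 (f 0) ≤ f t := by
  have hcont : ContinuousOn f (Icc 0 t) := fun s hs =>
    (hf s hs.1).continuousWithinAt.mono Icc_subset_Ici_self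
  by_contra! h
  obtain ⟨s, hs, hs'⟩ := intermediate_value_Icc' ht hcont
    (show min 0 (f 0) ∈ Icc (f t) (f 0) from ⟨h.le, min_le_right _ _⟩)
  have h1 : |f t| ≤ |f s| := abs_antitone hQ hQpos hQneg h0 hf hs.1 ht hs.2
  have h2 : min 0 (f 0) ≤ 0 := min_le_left _ _
  rw [hs', abs_of_nonpos h2, abs_of_nonpos (h.le.trans h2)] at h1
  linarith

/-- For the family, indexed by the Lagrangian label `y ∈ ℝ^d`, of
solutions of the damped ODE `d/dt b̃ = -c²(1+b̃)Q(b̃)` with data `b₀` satisfying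
`1 + b₀ > 0`, the sup norm in `y` is nonincreasing in time and
`1 + b̃(t,y) ≥ min(1, inf_x (1 + b₀ x))` for all `t ≥ 0` and all `y`. -/
theorem statement7 (d : ℕ) (hd : 1 ≤ d) (c : ℝ) (hc : 0 < c)
    (Q : ℝ → ℝ) (hQ : ContDiff ℝ 1 Q) (hQ0 : Q 0 = 0)
    (hQpos : ∀ z, 0 ≤ z → 0 ≤ Q z) (hQneg : ∀ z, z ∈ Ioo (-1:ℝ) 0 → Q z ≤ 0)
    (b₀ : (Fin d → ℝ) → ℝ) (hb₀ : ∀ y, 0 < 1 + b₀ y)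
    (bt : ℝ → (Fin d → ℝ) → ℝ)
    (hinit : ∀ y, bt 0 y = b₀ y)
    (hode : ∀ y, ∀ t ∈ Ici (0:ℝ),
      HasDerivWithinAt (fun s => bt s y)
        (-(c ^ 2 * ((1 + bt t y) * Q (bt t y)))) (Ici 0) t) :
    (∀ t₁ t₂ : ℝ, 0 ≤ t₁ → t₁ ≤ t₂ →
      (⨆ y, (‖bt t₂ y‖₊ : ENNReal)) ≤ ⨆ y, (‖bt t₁ y‖₊ : ENNReal))
    ∧ (∀ t, 0 ≤ t → ∀ y, min 1 (⨅ x, (1 + b₀ x)) ≤ 1 + bt t y) := by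
  have h0 : ∀ y, 0 < 1 + bt 0 y := fun y => by rw [hinit]; exact hb₀ y
  refine ⟨fun t₁ t₂ h1 h12 => iSup_mono fun y => ?_, fun t ht y => ?_⟩
  · have h : |bt t₂ y| ≤ |bt t₁ y| :=
      abs_antitone hQ.continuous hQpos hQneg (f := fun s => bt s y) (h0 y) (hode y)
        h1 (h1.trans h12) h12
    exact ENNReal.coe_le_coe.2 (by exact_mod_cast h)
  · have h : min 0 (bt 0 y) ≤ bt t y :=
      min_le_sol hQ.continuous hQpos hQneg (f := fun s => bt s y) (h0 y) (hode y) ht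
    -- the real infimum is genuine: `1 + b₀` is bounded below by `0`
    have hinf : ⨅ x, (1 + b₀ x) ≤ 1 + b₀ y :=
      ciInf_le ⟨0, by rintro _ ⟨x, rfl⟩; exact (hb₀ x).le⟩ y
    rw [hinit] at h
    rcases min_le_iff.1 h with h | h
    · exact (min_le_left _ _).trans (by linarith)
    · exact (min_le_right _ _).trans (by linarith)
end

section
/- Let d ≥ 1, let b : ℝ^d → ℝ be C² with compact support, and let u, U : ℝ^d → ℝ^d be C¹ vector fields. Then ∫_{ℝ^d} ( div(b u) div U − (u·∇U)·∇b ) dx = ∫_{ℝ^d} div u · div(b U) dx − ∫_{ℝ^d} (U·∇u)·∇b dx, where (u·∇U)^j := Σ_k u^k ∂_k U^j. -/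
/-! By the product rule, the left integrand minus the combined right one is the sum over `j, k`
of `∂_j F ∂_k b - ∂_k F ∂_j b` with `F = u^k U^j`: the terms `b div u div U` cancel. Each summand
integrates to zero (`integral_pd_mul_pd_comm`): integrating by parts onto the compactly supported
`b`, this is the symmetry of the second derivatives of `b`. -/

open Real Set MeasureTheory Function

noncomputable section

variable {d : ℕ}

/-- Partial derivative in direction `i` of a scalar function on `ℝ^d`. -/
def pd (f : (Fin d → ℝ) → ℝ) (i : Fin d) (x : Fin d → ℝ) : ℝ :=
  fderiv ℝ f x (Pi.single i 1)

/-- Divergence of a vector field on `ℝ^d`. -/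
def dvg (u : (Fin d → ℝ) → (Fin d → ℝ)) (x : Fin d → ℝ) : ℝ :=
  ∑ i, pd (fun y => u y i) i x

/-- Laplacian of a scalar function on `ℝ^d`. -/
def lap (f : (Fin d → ℝ) → ℝ) (x : Fin d → ℝ) : ℝ :=
  ∑ i, pd (pd f i) i x

/-- Constant-coefficient Lamé operator `𝒜 U = -μ Δ U - (1-μ) ∇ (div U)`,
acting componentwise. -/
def lame (μ : ℝ) (u : (Fin d → ℝ) → (Fin d → ℝ)) (x : Fin d → ℝ) (j : Fin d) : ℝ :=
  -μ * lap (fun y => u y j) x - (1 - μ) * pd (dvg u) j x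

theorem pd_continuous {f : (Fin d → ℝ) → ℝ} (hf : ContDiff ℝ 1 f) (i : Fin d) :
    Continuous (pd f i) :=
  (hf.continuous_fderiv one_ne_zero).clm_apply continuous_const

theorem pd_contDiff {f : (Fin d → ℝ) → ℝ} (hf : ContDiff ℝ 2 f) (i : Fin d) :
    ContDiff ℝ 1 (pd f i) :=
  (hf.fderiv_right (m := 1) (by norm_num)).clm_apply contDiff_const

theorem pd_mul {f g : (Fin d → ℝ) → ℝ} (hf : ContDiff ℝ 1 f) (hg : ContDiff ℝ 1 g)
    (i : Fin d) (x : Fin d → ℝ) :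
    pd (fun y => f y * g y) i x = f x * pd g i x + pd f i x * g x := by
  have hf' := hf.differentiable one_ne_zero x
  have hg' := hg.differentiable one_ne_zero x
  simp only [pd]
  rw [fderiv_fun_mul hf' hg']
  simp [mul_comm]

theorem pd_comm {f : (Fin d → ℝ) → ℝ} (hf : ContDiff ℝ 2 f) (i j : Fin d)
    (x : Fin d → ℝ) : pd (pd f i) j x = pd (pd f j) i x := by
  have hd : DifferentiableAt ℝ (fderiv ℝ f) x :=
    (hf.fderiv_right (m := 1) (by norm_num)).differentiable one_ne_zero x
  have key : ∀ i j : Fin d, pd (pd f i) j x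
      = fderiv ℝ (fderiv ℝ f) x (Pi.single j 1) (Pi.single i 1) := by
    intro i j
    change fderiv ℝ (fun y => fderiv ℝ f y (Pi.single i 1)) x (Pi.single j 1) = _
    rw [fderiv_clm_apply hd (differentiableAt_const _)]
    simp
  rw [key, key]
  exact (hf.contDiffAt.isSymmSndFDerivAt (by simp)).eq _ _

theorem pd_eq_zero_of_notMem {f : (Fin d → ℝ) → ℝ} {x : Fin d → ℝ} (hx : x ∉ tsupport f)
    (i : Fin d) : pd f i x = 0 := by
  simp [pd, fderiv_of_notMem_tsupport ℝ hx]

theorem integrable_of_zero_off {b f : (Fin d → ℝ) → ℝ} (hbs : HasCompactSupport b)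
    (hf : Continuous f) (h : ∀ x, x ∉ tsupport b → f x = 0) : Integrable f :=
  hf.integrable_of_hasCompactSupport (HasCompactSupport.intro hbs h)

/-- Two integrations by parts move both derivatives onto `b`, where they commute; thus the
derivatives on `F` and `b` may be exchanged under the integral. -/
theorem integral_pd_mul_pd_comm {F b : (Fin d → ℝ) → ℝ} (hF : ContDiff ℝ 1 F)
    (hb : ContDiff ℝ 2 b) (hbs : HasCompactSupport b) (j k : Fin d) :
    ∫ x, pd F j x * pd b k x = ∫ x, pd F k x * pd b j x := by
  have key : ∀ j k : Fin d, ∫ x, F x * pd (pd b k) j x = -∫ x, pd F j x * pd b k x := by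
    intro j k
    have hz : ∀ x, x ∉ tsupport b → pd b k x = 0 := fun x hx => pd_eq_zero_of_notMem hx k
    have hz2 : ∀ x, x ∉ tsupport b → pd (pd b k) j x = 0 := fun x hx =>
      pd_eq_zero_of_notMem
        (fun h => hx (closure_minimal
          (fun y (hy : pd b k y ≠ 0) => by_contra fun hy' => hy (hz y hy'))
          (isClosed_tsupport b) h)) j
    have hc := pd_contDiff hb k
    refine integral_mul_fderiv_eq_neg_fderiv_mul_of_integrable (v := Pi.single j 1)
      (integrable_of_zero_off hbs ((pd_continuous hF j).mul hc.continuous) ?_)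
      (integrable_of_zero_off hbs (hF.continuous.mul (pd_continuous hc j)) ?_)
      (integrable_of_zero_off hbs (hF.continuous.mul hc.continuous) ?_)
      (fun x _ => hF.differentiable one_ne_zero x) (fun x _ => hc.differentiable one_ne_zero x)
    · intro x hx; simp [hz x hx]
    · intro x hx; exact mul_eq_zero_of_right _ (hz2 x hx)
    · intro x hx; simp [hz x hx]
  rw [← neg_inj, ← key, ← key]
  simp_rw [pd_comm hb k j]

theorem dvg_smul {b : (Fin d → ℝ) → ℝ} {u : (Fin d → ℝ) → (Fin d → ℝ)} (hb : ContDiff ℝ 1 b)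
    (hu : ContDiff ℝ 1 u) (x : Fin d → ℝ) :
    dvg (fun y => b y • u y) x = b x * dvg u x + ∑ i, pd b i x * u x i := by
  simp only [dvg, Pi.smul_apply, smul_eq_mul, Finset.mul_sum, ← Finset.sum_add_distrib]
  exact Finset.sum_congr rfl fun i _ => pd_mul hb (contDiff_pi.1 hu i) i x

theorem dvg_continuous {u : (Fin d → ℝ) → (Fin d → ℝ)} (hu : ContDiff ℝ 1 u) :
    Continuous (dvg u) :=
  continuous_finsetSum _ fun i _ => pd_continuous (contDiff_pi.1 hu i) i

/-- The integration-by-parts identity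
`∫ (div(bu) div U - (u·∇U)·∇b) = ∫ div u · div(bU) - ∫ (U·∇u)·∇b`
for `b ∈ C²` compactly supported and `u, U ∈ C¹` vector fields. -/
theorem statement11 (d : ℕ) (hd : 1 ≤ d)
    (b : (Fin d → ℝ) → ℝ) (hb : ContDiff ℝ 2 b) (hbs : HasCompactSupport b)
    (u U : (Fin d → ℝ) → (Fin d → ℝ)) (hu : ContDiff ℝ 1 u) (hU : ContDiff ℝ 1 U) :
    (∫ x, (dvg (fun y => b y • u y) x * dvg U x
        - ∑ j, (∑ k, u x k * pd (fun y => U y j) k x) * pd b j x))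
      = (∫ x, dvg u x * dvg (fun y => b y • U y) x)
        - ∫ x, ∑ j, (∑ k, U x k * pd (fun y => u y j) k x) * pd b j x := by
  have hb1 : ContDiff ℝ 1 b := hb.of_le (by norm_num)
  have hui := contDiff_pi.1 hu
  have hUi := contDiff_pi.1 hU
  have cu := fun i => (hui i).continuous
  have cU := fun i => (hUi i).continuous
  have cdu := fun i k => pd_continuous (hui i) k
  have cdU := fun i k => pd_continuous (hUi i) k
  have cb := hb1.continuous
  have cdb := fun k => pd_continuous hb1 k
  have cvu := dvg_continuous hu
  have cvU := dvg_continuous hU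
  have hz : ∀ x, x ∉ tsupport b → ∀ i, pd b i x = 0 := fun x hx => pd_eq_zero_of_notMem hx
  have hz0 : ∀ x, x ∉ tsupport b → b x = 0 := fun x hx => image_eq_zero_of_notMem_tsupport hx
  simp only [dvg_smul hb1 hu, dvg_smul hb1 hU]
  rw [← integral_sub, ← sub_eq_zero, ← integral_sub]
  · have hF : ∀ j k, ContDiff ℝ 1 (fun y => u y k * U y j) := fun j k => (hui k).mul (hUi j)
    have hI : ∀ j k l m, Integrable (fun x => pd (fun y => u y k * U y j) l x * pd b m x) :=
      fun j k l m => integrable_of_zero_off hbs ((pd_continuous (hF j k) l).mul (cdb m))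
        fun x hx => by simp [hz x hx]
    have hS : ∀ j k, Integrable (fun x => pd (fun y => u y k * U y j) j x * pd b k x
        - pd (fun y => u y k * U y j) k x * pd b j x) :=
      fun j k => (hI j k j k).sub (hI j k k j)
    trans ∫ x, ∑ j, ∑ k, (pd (fun y => u y k * U y j) j x * pd b k x
        - pd (fun y => u y k * U y j) k x * pd b j x)
    · congr 1
      ext x
      simp only [pd_mul (hui _) (hUi _)]
      have e1 : (∑ j, ∑ k, u x k * pd (fun y => U y j) j x * pd b k x)
          = dvg U x * ∑ k, pd b k x * u x k := by
        rw [dvg, Finset.sum_mul_sum]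
        exact Finset.sum_congr rfl fun j _ => Finset.sum_congr rfl fun k _ => by ring
      have e2 : (∑ j, ∑ k, pd (fun y => u y k) j x * U x j * pd b k x)
          = ∑ j, (∑ k, U x k * pd (fun y => u y j) k x) * pd b j x := by
        rw [Finset.sum_comm]
        simp only [Finset.sum_mul]
        exact Finset.sum_congr rfl fun j _ => Finset.sum_congr rfl fun k _ => by ring
      have e3 : (∑ j, ∑ k, u x k * pd (fun y => U y j) k x * pd b j x)
          = ∑ j, (∑ k, u x k * pd (fun y => U y j) k x) * pd b j x := by
        simp only [Finset.sum_mul]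
      have e4 : (∑ j, ∑ k, pd (fun y => u y k) k x * U x j * pd b j x)
          = dvg u x * ∑ k, pd b k x * U x k := by
        rw [Finset.sum_comm, dvg, Finset.sum_mul_sum]
        exact Finset.sum_congr rfl fun j _ => Finset.sum_congr rfl fun k _ => by ring
      simp only [add_mul, Finset.sum_sub_distrib, Finset.sum_add_distrib]
      rw [e1, e2, e3, e4]
      ring
    · rw [integral_finsetSum _ fun j _ => integrable_finsetSum _ fun k _ => hS j k]
      refine Finset.sum_eq_zero fun j _ => ?_
      rw [integral_finsetSum _ fun k _ => hS j k]
      refine Finset.sum_eq_zero fun k _ => ?_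
      rw [integral_sub (hI j k j k) (hI j k k j), sub_eq_zero]
      exact integral_pd_mul_pd_comm (hF j k) hb hbs j k
  all_goals
    refine integrable_of_zero_off hbs (by fun_prop) fun x hx => ?_
    simp [hz x hx, hz0 x hx]
end
end

section
/- Let d ≥ 1, μ ∈ ℝ, T > 0. Let b, R : (0,T) × ℝ^d → ℝ and u, U, h : (0,T) × ℝ^d → ℝ^d be smooth, with b(t,·) and U(t,·) compactly supported in x, uniformly for t in compact subintervals of (0,T), and suppose pointwise ∂_t b + div(b u) + div U = R and ∂_t U + (u·∇)U + 𝒜U + ∇b = h. Then for every t ∈ (0,T), d/dt ∫_{ℝ^d} U·∇b dx − ∫ (div U)² dx + ∫ |∇b|² dx = −∫ 𝒜U·∇b dx + ∫ ( div(b u) div U − (u·∇U)·∇b ) dx + ∫ ( U·∇R + h·∇b ) dx. -/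
/-!
Differentiating under the integral sign, `d/dt ∫ U·∇b = ∫ (∂ₜU·∇b + U·∇∂ₜb)`: the integrand is
smooth and vanishes off a fixed compact set for nearby times (`hasDerivAt_integral_slab`), and
`∂ₜ` commutes with the spatial partial derivatives (`deriv_pd_comm`). Substituting the momentum
equation for `∂ₜU` gives the terms in `h`, `u·∇U`, `𝒜U` and `|∇b|²`. Substituting the continuity
equation `∂ₜb = R - div(bu) - div U` leaves `U·∇R` and, after moving the gradient onto `U` by
the divergence theorem (`integral_field_grad`), the terms `div(bu) div U` and `(div U)²`.
-/

open Real Set MeasureTheory Function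

noncomputable section

variable {d : ℕ}

section Helpers

lemma contDiff_pd {f : (Fin d → ℝ) → ℝ} (hf : ContDiff ℝ (⊤ : ℕ∞) f) (i : Fin d) :
    ContDiff ℝ (⊤ : ℕ∞) (pd f i) :=
  (hf.fderiv_right (m := (⊤ : ℕ∞)) (by simp)).clm_apply contDiff_const

lemma contDiff_dvg {u : (Fin d → ℝ) → (Fin d → ℝ)} (hu : ContDiff ℝ (⊤ : ℕ∞) u) :
    ContDiff ℝ (⊤ : ℕ∞) (dvg u) :=
  ContDiff.sum fun i _ => contDiff_pd (contDiff_pi.1 hu i) i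

lemma contDiff_lame (μ : ℝ) {u : (Fin d → ℝ) → (Fin d → ℝ)} (hu : ContDiff ℝ (⊤ : ℕ∞) u)
    (j : Fin d) : ContDiff ℝ (⊤ : ℕ∞) (fun x => lame μ u x j) := by
  have h1 : ContDiff ℝ (⊤ : ℕ∞) (lap (fun y => u y j)) :=
    ContDiff.sum fun i _ => contDiff_pd (contDiff_pd (contDiff_pi.1 hu j) i) i
  exact (contDiff_const.mul h1).sub (contDiff_const.mul (contDiff_pd (contDiff_dvg hu) j))

/-- Partial derivatives do not enlarge a closed set outside which a function vanishes. -/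
lemma pd_eq_zero_off {f : (Fin d → ℝ) → ℝ} {K : Set (Fin d → ℝ)} (hK : IsClosed K)
    (hf : ∀ x, x ∉ K → f x = 0) (i : Fin d) (x : Fin d → ℝ) (hx : x ∉ K) : pd f i x = 0 := by
  have : f =ᶠ[nhds x] fun _ => 0 := by
    filter_upwards [hK.isOpen_compl.mem_nhds hx] with y hy using hf y hy
  simp [pd, this.fderiv_eq]

lemma dvg_eq_zero_off {u : (Fin d → ℝ) → (Fin d → ℝ)} {K : Set (Fin d → ℝ)} (hK : IsClosed K)
    (hu : ∀ x, x ∉ K → u x = 0) (x : Fin d → ℝ) (hx : x ∉ K) : dvg u x = 0 :=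
  Finset.sum_eq_zero fun i _ => pd_eq_zero_off hK (fun y hy => by simp [hu y hy]) i x hx

lemma integrable_of_zero_off_s13 {f : (Fin d → ℝ) → ℝ} {K : Set (Fin d → ℝ)} (hK : IsCompact K)
    (hc : Continuous f) (hf : ∀ x, x ∉ K → f x = 0) : Integrable f :=
  hc.integrable_of_hasCompactSupport (HasCompactSupport.intro hK hf)

/-- The divergence theorem `∫ V·∇g = -∫ (div V) g` for a compactly supported field `V`. -/
lemma integral_field_grad {V : (Fin d → ℝ) → (Fin d → ℝ)} {g : (Fin d → ℝ) → ℝ}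
    {K : Set (Fin d → ℝ)} (hK : IsCompact K) (hV : ContDiff ℝ (⊤ : ℕ∞) V)
    (hg : ContDiff ℝ (⊤ : ℕ∞) g) (hVK : ∀ x, x ∉ K → V x = 0) :
    ∫ x, ∑ j, V x j * pd g j x = -∫ x, dvg V x * g x := by
  have hVj : ∀ j, ContDiff ℝ (⊤ : ℕ∞) (fun y => V y j) := fun j => contDiff_pi.1 hV j
  have hVK' : ∀ j x, x ∉ K → V x j = 0 := fun j x hx => by simp [hVK x hx]
  have i1 : ∀ j, Integrable (fun x => V x j * pd g j x) := fun j =>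
    integrable_of_zero_off_s13 hK ((hVj j).continuous.mul (contDiff_pd hg j).continuous)
      (fun x hx => by simp [hVK x hx])
  have i2 : ∀ j, Integrable (fun x => pd (fun y => V y j) j x * g x) := fun j =>
    integrable_of_zero_off_s13 hK ((contDiff_pd (hVj j) j).continuous.mul hg.continuous)
      (fun x hx => by simp [pd_eq_zero_off hK.isClosed (hVK' j) j x hx])
  have i3 : ∀ j, Integrable (fun x => V x j * g x) := fun j =>
    integrable_of_zero_off_s13 hK ((hVj j).continuous.mul hg.continuous)
      (fun x hx => by simp [hVK x hx])
  simp only [dvg, Finset.sum_mul]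
  rw [integral_finsetSum _ fun j _ => i1 j, integral_finsetSum _ fun j _ => i2 j,
    ← Finset.sum_neg_distrib]
  refine Finset.sum_congr rfl fun j _ => ?_
  exact integral_mul_fderiv_eq_neg_fderiv_mul_of_integrable (i2 j) (i1 j) (i3 j)
    (fun x _ => (hVj j).differentiable (by simp) x) (fun x _ => hg.differentiable (by simp) x)

variable {T : ℝ}

/-- The space-time slab `(0,T) × ℝ^d`. -/
abbrev slab (d : ℕ) (T : ℝ) : Set (ℝ × (Fin d → ℝ)) := Ioo (0:ℝ) T ×ˢ univ

lemma slab_mem_nhds {t : ℝ} (ht : t ∈ Ioo (0:ℝ) T) (x : Fin d → ℝ) :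
    slab d T ∈ nhds (t, x) :=
  (isOpen_Ioo.prod isOpen_univ).mem_nhds ⟨ht, mem_univ x⟩

lemma contDiff_slice {G : Type*} [NormedAddCommGroup G] [NormedSpace ℝ G]
    {F : ℝ → (Fin d → ℝ) → G} (hF : ContDiffOn ℝ (⊤ : ℕ∞) (uncurry F) (slab d T))
    {t : ℝ} (ht : t ∈ Ioo (0:ℝ) T) : ContDiff ℝ (⊤ : ℕ∞) (F t) := by
  rw [contDiff_iff_contDiffAt]
  intro x
  exact (hF.contDiffAt (slab_mem_nhds ht x)).comp (f := fun y => (t, y)) x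
    (contDiffAt_const.prodMk contDiffAt_id)

lemma pd_slice {F : ℝ → (Fin d → ℝ) → ℝ} {t : ℝ} {x : Fin d → ℝ}
    (hF : DifferentiableAt ℝ (uncurry F) (t, x)) (j : Fin d) :
    pd (F t) j x = fderiv ℝ (uncurry F) (t, x) (0, Pi.single j 1) := by
  have h := hF.hasFDerivAt.comp (f := fun y => (t, y)) x (hasFDerivAt_prodMk_right t x)
  have h' : HasFDerivAt (F t) _ x := h
  simp [pd, h'.fderiv]

lemma hasDerivAt_slice {F : ℝ → (Fin d → ℝ) → ℝ} {t : ℝ} {x : Fin d → ℝ}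
    (hF : DifferentiableAt ℝ (uncurry F) (t, x)) :
    HasDerivAt (fun s => F s x) (fderiv ℝ (uncurry F) (t, x) (1, 0)) t :=
  hF.hasFDerivAt.comp_hasDerivAt (f := fun s => (s, x)) t
    ((hasDerivAt_id t).prodMk (hasDerivAt_const t x))

lemma diffAt_slab {G : Type*} [NormedAddCommGroup G] [NormedSpace ℝ G]
    {F : ℝ × (Fin d → ℝ) → G} (hF : ContDiffOn ℝ (⊤ : ℕ∞) F (slab d T))
    {t : ℝ} (ht : t ∈ Ioo (0:ℝ) T) (x : Fin d → ℝ) : DifferentiableAt ℝ F (t, x) :=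
  (hF.contDiffAt (slab_mem_nhds ht x)).differentiableAt (by simp)

lemma contDiffOn_fderiv_apply {F : ℝ × (Fin d → ℝ) → ℝ}
    (hF : ContDiffOn ℝ (⊤ : ℕ∞) F (slab d T)) (v : ℝ × (Fin d → ℝ)) :
    ContDiffOn ℝ (⊤ : ℕ∞) (fun p => fderiv ℝ F p v) (slab d T) :=
  (hF.fderiv_of_isOpen (m := (⊤ : ℕ∞)) (isOpen_Ioo.prod isOpen_univ) (by simp)).clm_apply
    contDiffOn_const

lemma contDiffOn_pd {F : ℝ → (Fin d → ℝ) → ℝ}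
    (hF : ContDiffOn ℝ (⊤ : ℕ∞) (uncurry F) (slab d T)) (j : Fin d) :
    ContDiffOn ℝ (⊤ : ℕ∞) (uncurry fun t x => pd (F t) j x) (slab d T) :=
  (contDiffOn_fderiv_apply hF (0, Pi.single j 1)).congr fun p hp =>
    pd_slice (diffAt_slab hF hp.1 p.2) j

lemma contDiffOn_dt {F : ℝ → (Fin d → ℝ) → ℝ}
    (hF : ContDiffOn ℝ (⊤ : ℕ∞) (uncurry F) (slab d T)) :
    ContDiffOn ℝ (⊤ : ℕ∞) (uncurry fun t x => deriv (fun s => F s x) t) (slab d T) :=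
  (contDiffOn_fderiv_apply hF (1, 0)).congr fun p hp =>
    (hasDerivAt_slice (diffAt_slab hF hp.1 p.2)).deriv

/-- Schwarz's theorem: the time derivative commutes with spatial partial derivatives. -/
lemma deriv_pd_comm {F : ℝ → (Fin d → ℝ) → ℝ}
    (hF : ContDiffOn ℝ (⊤ : ℕ∞) (uncurry F) (slab d T)) {t : ℝ} (ht : t ∈ Ioo (0:ℝ) T)
    (x : Fin d → ℝ) (j : Fin d) :
    deriv (fun s => pd (F s) j x) t = pd (fun y => deriv (fun s => F s y) t) j x := by
  have hsm := hF.contDiffAt (slab_mem_nhds ht x)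
  have hsymm : IsSymmSndFDerivAt ℝ (uncurry F) (t, x) := hsm.isSymmSndFDerivAt (by
    rw [minSmoothness_of_isRCLikeNormedField]
    exact WithTop.coe_le_coe.2 (le_top : (2 : ℕ∞) ≤ ⊤))
  have hd2 : DifferentiableAt ℝ (fderiv ℝ (uncurry F)) (t, x) :=
    (hsm.fderiv_right (m := (⊤ : ℕ∞)) (by simp)).differentiableAt (by simp)
  have key : ∀ v w : ℝ × (Fin d → ℝ),
      fderiv ℝ (fun p => fderiv ℝ (uncurry F) p v) (t, x) w
        = fderiv ℝ (fderiv ℝ (uncurry F)) (t, x) w v := by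
    intro v w
    rw [fderiv_clm_apply hd2 (differentiableAt_const v)]
    simp
  have e1 : (uncurry fun s y => pd (F s) j y) =ᶠ[nhds (t, x)]
      fun p => fderiv ℝ (uncurry F) p (0, Pi.single j 1) := by
    filter_upwards [slab_mem_nhds ht x] with p hp using pd_slice (diffAt_slab hF hp.1 p.2) j
  have e2 : (uncurry fun s y => deriv (fun s => F s y) s) =ᶠ[nhds (t, x)]
      fun p => fderiv ℝ (uncurry F) p (1, 0) := by
    filter_upwards [slab_mem_nhds ht x] with p hp using
      (hasDerivAt_slice (diffAt_slab hF hp.1 p.2)).deriv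
  rw [(hasDerivAt_slice (F := fun s y => pd (F s) j y)
      (diffAt_slab (contDiffOn_pd hF j) ht x)).deriv,
    pd_slice (F := fun s y => deriv (fun s => F s y) s) (diffAt_slab (contDiffOn_dt hF) ht x) j,
    e1.fderiv_eq, e2.fderiv_eq, key, key]
  exact hsymm.eq _ _

/-- Differentiation under the integral sign for a smooth integrand supported, locally uniformly
in time, in a compact set; the dominating function is a constant on that set. -/
lemma hasDerivAt_integral_slab {F : ℝ → (Fin d → ℝ) → ℝ}
    (hF : ContDiffOn ℝ (⊤ : ℕ∞) (uncurry F) (slab d T)) {t t₁ t₂ : ℝ} (h0 : 0 < t₁)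
    (h1 : t₁ < t) (h2 : t < t₂) (h3 : t₂ < T) {K : Set (Fin d → ℝ)} (hK : IsCompact K)
    (hFK : ∀ s ∈ Icc t₁ t₂, ∀ x, x ∉ K → F s x = 0) :
    HasDerivAt (fun s => ∫ x, F s x) (∫ x, deriv (fun s => F s x) t) t := by
  have hsub : ∀ s ∈ Icc t₁ t₂, s ∈ Ioo (0:ℝ) T := fun s hs =>
    ⟨h0.trans_le hs.1, hs.2.trans_lt h3⟩
  have htI : t ∈ Icc t₁ t₂ := ⟨h1.le, h2.le⟩
  obtain ⟨C, hC⟩ := (isCompact_Icc.prod hK).exists_bound_of_continuousOn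
    ((contDiffOn_dt hF).continuousOn.mono
      (fun p hp => ⟨hsub _ hp.1, mem_univ _⟩ : Icc t₁ t₂ ×ˢ K ⊆ slab d T))
  have hnhds : Ioo t₁ t₂ ∈ nhds t := Ioo_mem_nhds h1 h2
  refine (hasDerivAt_integral_of_dominated_loc_of_deriv_le
    (F := F) (F' := fun s x => deriv (fun r => F r x) s)
    (bound := K.indicator fun _ => C) hnhds ?_ ?_ ?_ ?_ ?_ ?_).2
  · filter_upwards [hnhds] with s hs
    exact (contDiff_slice hF (hsub s (Ioo_subset_Icc_self hs))).continuous.aestronglyMeasurable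
  · exact integrable_of_zero_off_s13 hK (contDiff_slice hF (hsub t htI)).continuous (hFK t htI)
  · exact (contDiff_slice (contDiffOn_dt hF) (hsub t htI)).continuous.aestronglyMeasurable
  · refine Filter.Eventually.of_forall fun x s hs => ?_
    by_cases hx : x ∈ K
    · simpa [hx] using hC (s, x) ⟨Ioo_subset_Icc_self hs, hx⟩
    · have : (fun r => F r x) =ᶠ[nhds s] fun _ => 0 := by
        filter_upwards [Ioo_mem_nhds hs.1 hs.2] with r hr using
          hFK r (Ioo_subset_Icc_self hr) x hx
      simp [hx, this.deriv_eq]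
  · exact (integrable_indicator_iff hK.isClosed.measurableSet).2
      (integrableOn_const hK.measure_lt_top.ne)
  · refine Filter.Eventually.of_forall fun x s hs => ?_
    exact (hasDerivAt_slice
      (diffAt_slab hF (hsub s (Ioo_subset_Icc_self hs)) x)).differentiableAt.hasDerivAt

end Helpers

/-- The cross-term energy identity for the localized linearized
compressible Navier–Stokes system: if `∂ₜb + div(bu) + div U = R` and
`∂ₜU + (u·∇)U + 𝒜U + ∇b = h`, then
`d/dt ∫ U·∇b - ∫(div U)² + ∫|∇b|² = -∫ 𝒜U·∇b
  + ∫(div(bu) div U - (u·∇U)·∇b) + ∫(U·∇R + h·∇b)`. -/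
theorem statement13 (d : ℕ) (hd : 1 ≤ d) (μ T : ℝ) (hT : 0 < T)
    (b R : ℝ → (Fin d → ℝ) → ℝ) (u U h : ℝ → (Fin d → ℝ) → (Fin d → ℝ))
    (hb : ContDiffOn ℝ (⊤ : ℕ∞) (uncurry b) (Ioo (0:ℝ) T ×ˢ (univ : Set (Fin d → ℝ))))
    (hR : ContDiffOn ℝ (⊤ : ℕ∞) (uncurry R) (Ioo (0:ℝ) T ×ˢ (univ : Set (Fin d → ℝ))))
    (hu : ContDiffOn ℝ (⊤ : ℕ∞) (uncurry u) (Ioo (0:ℝ) T ×ˢ (univ : Set (Fin d → ℝ))))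
    (hU : ContDiffOn ℝ (⊤ : ℕ∞) (uncurry U) (Ioo (0:ℝ) T ×ˢ (univ : Set (Fin d → ℝ))))
    (hh : ContDiffOn ℝ (⊤ : ℕ∞) (uncurry h) (Ioo (0:ℝ) T ×ˢ (univ : Set (Fin d → ℝ))))
    (hsupp : ∀ t₁ t₂ : ℝ, 0 < t₁ → t₂ < T → ∃ K : Set (Fin d → ℝ), IsCompact K ∧
      ∀ t ∈ Icc t₁ t₂, ∀ x, x ∉ K → b t x = 0 ∧ U t x = 0)
    (heq1 : ∀ t ∈ Ioo (0:ℝ) T, ∀ x,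
      deriv (fun s => b s x) t + dvg (fun y => b t y • u t y) x + dvg (U t) x
        = R t x)
    (heq2 : ∀ t ∈ Ioo (0:ℝ) T, ∀ x j,
      deriv (fun s => U s x j) t + (∑ k, u t x k * pd (fun y => U t y j) k x)
        + lame μ (U t) x j + pd (b t) j x = h t x j) :
    ∀ t ∈ Ioo (0:ℝ) T,
      HasDerivAt (fun s => ∫ x, ∑ j, U s x j * pd (b s) j x)
        ((∫ x, (dvg (U t) x) ^ 2) - (∫ x, ∑ j, (pd (b t) j x) ^ 2)
          - (∫ x, ∑ j, lame μ (U t) x j * pd (b t) j x)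
          + (∫ x, (dvg (fun y => b t y • u t y) x * dvg (U t) x
              - ∑ j, (∑ k, u t x k * pd (fun y => U t y j) k x) * pd (b t) j x))
          + ∫ x, ((∑ j, U t x j * pd (R t) j x) + ∑ j, h t x j * pd (b t) j x)) t := by
  intro t ht
  obtain ⟨t₁, h0, h1⟩ := exists_between ht.1
  obtain ⟨t₂, h2, h3⟩ := exists_between ht.2
  obtain ⟨K, hK, hKz⟩ := hsupp t₁ t₂ h0 h3
  have htI : t ∈ Icc t₁ t₂ := ⟨h1.le, h2.le⟩
  have hUj : ∀ j, ContDiffOn ℝ (⊤ : ℕ∞) (uncurry fun s x => U s x j) (slab d T) :=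
    fun j => contDiffOn_pi.1 hU j
  have hF : ContDiffOn ℝ (⊤ : ℕ∞) (uncurry fun s x => ∑ j, U s x j * pd (b s) j x)
      (slab d T) :=
    ContDiffOn.sum fun j _ => (hUj j).mul (contDiffOn_pd hb j)
  have main := hasDerivAt_integral_slab hF h0 h1 h2 h3 hK (fun s hs x hx =>
    Finset.sum_eq_zero fun j _ => by simp [(hKz s hs x hx).2])
  convert main using 1
  have sb := contDiff_slice hb ht
  have sR := contDiff_slice hR ht
  have su := contDiff_slice hu ht
  have sU := contDiff_slice hU ht
  have sh := contDiff_slice hh ht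
  have sbu : ContDiff ℝ (⊤ : ℕ∞) (fun y => b t y • u t y) := sb.smul su
  have sD := contDiff_dvg sbu
  have sV := contDiff_dvg sU
  set D := dvg (fun y => b t y • u t y) with hD
  set V := dvg (U t) with hV
  -- the continuity equation, solved for `∂ₜb` and differentiated in space
  have hbt : (fun y => deriv (fun s => b s y) t) = fun y => R t y - D y - V y := by
    funext y
    linarith [heq1 t ht y]
  have hpd : ∀ x j, pd (fun y => R t y - D y - V y) j x
      = pd (R t) j x - pd D j x - pd V j x := by
    intro x j
    have a1 := (sR.differentiable (by simp)) x
    have a2 := (sD.differentiable (by simp)) x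
    have a3 := (sV.differentiable (by simp)) x
    simp only [pd]
    rw [fderiv_fun_sub (a1.fun_sub a2) a3, fderiv_fun_sub a1 a2]
    rfl
  have hder : ∀ x, deriv (fun s => ∑ j, U s x j * pd (b s) j x) t
      = (∑ j, U t x j * pd (R t) j x + ∑ j, h t x j * pd (b t) j x)
        - (∑ j, (∑ k, u t x k * pd (fun y => U t y j) k x) * pd (b t) j x)
        - (∑ j, lame μ (U t) x j * pd (b t) j x) - (∑ j, (pd (b t) j x) ^ 2)
        - (∑ j, U t x j * pd D j x) - (∑ j, U t x j * pd V j x) := by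
    intro x
    have dU : ∀ j, DifferentiableAt ℝ (fun s => U s x j) t := fun j =>
      (hasDerivAt_slice (F := fun s x => U s x j) (diffAt_slab (hUj j) ht x)).differentiableAt
    have db : ∀ j, DifferentiableAt ℝ (fun s => pd (b s) j x) t := fun j =>
      (hasDerivAt_slice (F := fun s x => pd (b s) j x)
        (diffAt_slab (contDiffOn_pd hb j) ht x)).differentiableAt
    rw [deriv_fun_sum fun j _ => (dU j).fun_mul (db j)]
    simp only [← Finset.sum_add_distrib, ← Finset.sum_sub_distrib]
    refine Finset.sum_congr rfl fun j _ => ?_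
    rw [deriv_fun_mul (dU j) (db j), deriv_pd_comm hb ht x j, hbt, hpd]
    have e := heq2 t ht x j
    have e' : deriv (fun s => U s x j) t = h t x j
      - (∑ k, u t x k * pd (fun y => U t y j) k x) - lame μ (U t) x j - pd (b t) j x := by
      linarith
    rw [e']
    ring
  have cb := fun j => (contDiff_pd sb j).continuous
  have cR := fun j => (contDiff_pd sR j).continuous
  have cD := fun j => (contDiff_pd sD j).continuous
  have cV := fun j => (contDiff_pd sV j).continuous
  have cU := fun j => (contDiff_pi.1 sU j).continuous
  have cu := fun j => (contDiff_pi.1 su j).continuous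
  have ch := fun j => (contDiff_pi.1 sh j).continuous
  have cl := fun j => (contDiff_lame μ sU j).continuous
  have cpU := fun j k => (contDiff_pd (contDiff_pi.1 sU j) k).continuous
  have cD0 := sD.continuous
  have cV0 := sV.continuous
  have zU : ∀ x, x ∉ K → U t x = 0 := fun x hx => (hKz t htI x hx).2
  have zb : ∀ j x, x ∉ K → pd (b t) j x = 0 :=
    pd_eq_zero_off hK.isClosed fun x hx => (hKz t htI x hx).1
  have zV : ∀ x, x ∉ K → V x = 0 := dvg_eq_zero_off hK.isClosed zU
  have j1 : Integrable (fun x => ∑ j, U t x j * pd (R t) j x + ∑ j, h t x j * pd (b t) j x) :=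
    integrable_of_zero_off_s13 hK (by fun_prop) fun x hx => by simp [zU x hx, zb _ x hx]
  have j2 : Integrable (fun x =>
      ∑ j, (∑ k, u t x k * pd (fun y => U t y j) k x) * pd (b t) j x) :=
    integrable_of_zero_off_s13 hK (by fun_prop) fun x hx => by simp [zb _ x hx]
  have j3 : Integrable (fun x => ∑ j, lame μ (U t) x j * pd (b t) j x) :=
    integrable_of_zero_off_s13 hK (by fun_prop) fun x hx => by simp [zb _ x hx]
  have j4 : Integrable (fun x => ∑ j, (pd (b t) j x) ^ 2) :=
    integrable_of_zero_off_s13 hK (by fun_prop) fun x hx => by simp [zb _ x hx]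
  have j5 : Integrable (fun x => ∑ j, U t x j * pd D j x) :=
    integrable_of_zero_off_s13 hK (by fun_prop) fun x hx => by simp [zU x hx]
  have j6 : Integrable (fun x => ∑ j, U t x j * pd V j x) :=
    integrable_of_zero_off_s13 hK (by fun_prop) fun x hx => by simp [zU x hx]
  have j7 : Integrable (fun x => D x * V x) :=
    integrable_of_zero_off_s13 hK (by fun_prop) fun x hx => by simp [zV x hx]
  have p1 := integral_field_grad hK sU sD zU
  have p2 := integral_field_grad hK sU sV zU
  simp only [hder]
  rw [integral_sub (by fun_prop) j6, integral_sub (by fun_prop) j5,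
    integral_sub (by fun_prop) j4, integral_sub (by fun_prop) j3, integral_sub j1 j2,
    integral_sub j7 j2, p1, p2]
  have q1 : ∫ x, dvg (U t) x * D x = ∫ x, D x * V x := by
    simp only [← hV, mul_comm]
  have q2 : ∫ x, dvg (U t) x * V x = ∫ x, V x ^ 2 := by
    simp only [← hV, sq]
  rw [q1, q2]
  ring
end
end
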